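/- Let G be a finite simple connected graph on [n] and let I = I_c(G) be its complementary edge ideal. Then HS_1(I^{s+1}) = I^s · HS_1(I) for all s ≥ 0. Consequently, the first homological shift algebra HS_1(ℛ(I)) = ⊕_{s≥0} HS_1(I^s) is generated in degree 1 as a module over the Rees algebra ℛ(I). -/

import Mathlib

/-!
The generators of `I_c(G)^s` are the monomials with exponent `s·𝟙 - d`, where `d` is the degree
sequence of a multiset of `s` edges (`compIdeal_pow`). Both sides of the theorem are shown to be
the ideal generated by the monomials with exponent `(s+1)·𝟙 - f - ε_i`, where `f` is the degree
sequence of `s` edges and `i` is a vertex with at least two neighbours (`shiftExp`).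

* Such a monomial has one degree more than the generators of `I_c(G)^{s+1}`, so the Koszul strand
  in its multidegree has no `2`-chains. Two neighbours `j ≠ m` of `i` give the nonzero homology
  class `[j] - [m]` (`nontrivial_of_mem_shiftExp`).
* Conversely, if `Tor_1` is nonzero in multidegree `a`, two distinct generators divide `x^a`
  (`exists_two_of_nontrivial`), say with degree sequences `d ≠ d'`. By `exists_nonLeaf_bound`,
  `min d d' ≤ f + ε_i` with `f`, `i` as above. Indeed, let `d_k > d'_k`. If an edge `kl` of `d` has
  a non-leaf endpoint `l`, remove it from `d` and take `i = l`. Otherwise `d_k` is the sum of the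
  `d_l` over the leaves `l` attached to `k`, while the corresponding sum for `d'` is at most
  `d'_k < d_k`. Hence `d'_l < d_l` for some such leaf `l`; remove `kl` and take `i = k`. The vertex
  `k` is not a leaf, as otherwise the connected graph `G` would be a single edge and `d = d'`.

The equality with `I_c(G)^s · HS_1(I_c(G))` is then a comparison of generators (`mul_shift`).
-/

open MvPolynomial

namespace Paper

noncomputable section

variable (K : Type) [Field K] (n : ℕ)

/-- The polynomial ring `S = K[x_1, …, x_n]`. -/
abbrev S := MvPolynomial (Fin n) K

variable {n}

/-- The squarefree exponent vector of a subset `F ⊆ [n]`. -/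
def expF (F : Finset (Fin n)) : Fin n →₀ ℕ := ∑ j ∈ F, Finsupp.single j 1

variable {K}

/-- Basis of the multidegree-`a` component of the `i`-th term of the Koszul
complex of `x_1, …, x_n` tensored with the ideal `I`:  subsets `F` of
cardinality `i` such that `x^(a - ε_F) ∈ I`. -/
abbrev KB (I : Ideal (S K n)) (a : Fin n →₀ ℕ) (i : ℕ) : Type :=
  {F : Finset (Fin n) // F.card = i ∧ expF F ≤ a ∧
    (monomial (a - expF F) (1 : K) : S K n) ∈ I}

/-- The Koszul differential (in multidegree `a`) from homological degree
`i+1` to `i`. -/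
def kd (I : Ideal (S K n)) (a : Fin n →₀ ℕ) (i : ℕ) :
    (KB I a (i + 1) →₀ K) →ₗ[K] (KB I a i →₀ K) :=
  Finsupp.lsum K fun F =>
    LinearMap.toSpanSingleton K _
      (∑ j ∈ F.1.attach,
        ((-1 : K) ^ ((F.1.filter (fun x => x < j.1)).card)) •
          Finsupp.single
            (⟨F.1.erase j.1, by
              obtain ⟨hcard, hle, hmem⟩ := F.2
              have hj : j.1 ∈ F.1 := j.2
              have herase : expF (F.1.erase j.1) + Finsupp.single j.1 1 = expF F.1 := by
                simpa [expF] using Finset.sum_erase_add F.1 (fun k => Finsupp.single k (1:ℕ)) hj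
              refine ⟨by simp [Finset.card_erase_of_mem hj, hcard], ?_, ?_⟩
              · refine le_trans ?_ hle
                rw [← herase]; exact le_add_of_nonneg_right bot_le
              · have h1 : Finsupp.single j.1 1 ≤ expF F.1 := by
                  rw [← herase]; exact le_add_of_nonneg_left bot_le
                have key : a - expF (F.1.erase j.1) =
                    (a - expF F.1) + Finsupp.single j.1 1 := by
                  have : expF (F.1.erase j.1) = expF F.1 - Finsupp.single j.1 1 := by
                    rw [← herase]; simp
                  rw [this, tsub_tsub_assoc hle h1]
                rw [key]
                have : (monomial ((a - expF F.1) + Finsupp.single j.1 1) (1:K) : S K n)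
                    = (monomial (a - expF F.1) (1:K)) * (monomial (Finsupp.single j.1 1) (1:K)) := by
                  rw [monomial_mul, mul_one]
                rw [this]
                exact Ideal.mul_mem_right _ _ hmem⟩ : KB I a i) (1 : K))

/-- The outgoing Koszul differential from homological degree `i`
(the zero map when `i = 0`). -/
def kdOut (I : Ideal (S K n)) (a : Fin n →₀ ℕ) :
    (i : ℕ) → (KB I a i →₀ K) →ₗ[K] (KB I a (i - 1) →₀ K)
  | 0 => 0
  | (i + 1) => kd I a i

/-- The multidegree-`a` component of `Tor_i^S(K, I)`, computed as the `i`-th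
homology of the multidegree-`a` strand of the Koszul complex tensored
with `I`. -/
abbrev Hmod (I : Ideal (S K n)) (a : Fin n →₀ ℕ) (i : ℕ) :=
  ↥(Submodule.map (Submodule.mkQ (LinearMap.range (kd I a i)))
      (LinearMap.ker (kdOut I a i)))

/-- The `i`-th homological shift ideal `HS_i(I)`, generated by the monomials
`x^a` with `Tor_i^S(K, I)_a ≠ 0`. -/
def HSIdeal (i : ℕ) (I : Ideal (S K n)) : Ideal (S K n) :=
  Ideal.span {p | ∃ a : Fin n →₀ ℕ, Nontrivial (Hmod I a i) ∧ p = monomial a 1}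

/-- `I` is a monomial ideal. -/
def IsMonomialIdeal (I : Ideal (S K n)) : Prop :=
  ∃ A : Set (Fin n →₀ ℕ), I = Ideal.span ((fun a => (monomial a 1 : S K n)) '' A)

/-- `I` has a `d`-linear resolution: `Tor_i^S(K,I)_j = 0` whenever `j ≠ i + d`. -/
def LinearRes (d : ℕ) (I : Ideal (S K n)) : Prop :=
  ∀ (i : ℕ) (a : Fin n →₀ ℕ), (a.sum fun _ e => e) ≠ i + d → Subsingleton (Hmod I a i)

/-- The projective dimension of (a finitely generated multigraded module such
as) `I` over `S`: the largest `i` with `Tor_i^S(K, I) ≠ 0`. -/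
def pdim (I : Ideal (S K n)) : ℕ :=
  sSup {i | ∃ a, Nontrivial (Hmod I a i)}

variable (K n)

/-- The graded maximal ideal `𝔪 = (x_1, …, x_n)`. -/
def maxIdl : Ideal (S K n) := Ideal.span (Set.range X)

/-- The `i`-th squarefree power `𝔪^{[i]} = (x_F : F ⊆ [n], |F| = i)`. -/
def sqPow (i : ℕ) : Ideal (S K n) :=
  Ideal.span {p | ∃ F : Finset (Fin n), F.card = i ∧ p = monomial (expF F) 1}

/-- The exponent vector of `α = x_1⋯x_n`. -/
def aexp : Fin n →₀ ℕ := expF (Finset.univ : Finset (Fin n))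

/-- The edge ideal `I(G)` of a graph `G` on `[n]`. -/
def edgeIdeal (G : SimpleGraph (Fin n)) : Ideal (S K n) :=
  Ideal.span {p | ∃ i j, G.Adj i j ∧ p = X i * X j}

/-- The complementary edge ideal `I_c(G)` of a graph `G` on `[n]`. -/
def compIdeal (G : SimpleGraph (Fin n)) : Ideal (S K n) :=
  Ideal.span {p | ∃ i j, G.Adj i j ∧
    p = monomial (aexp n - Finsupp.single i 1 - Finsupp.single j 1) 1}


variable {K} {n}

end

/-! ### Degree sequences of multisets of edges -/

section Combinatorics

variable {n : ℕ}

/-- `DegVec G s d`: the vector `d` is the degree sequence of a multiset of `s` edges of `G`. -/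
inductive DegVec (G : SimpleGraph (Fin n)) : ℕ → (Fin n →₀ ℕ) → Prop
  | zero : DegVec G 0 0
  | add {s : ℕ} {f : Fin n →₀ ℕ} {i j : Fin n} (hf : DegVec G s f) (h : G.Adj i j) :
      DegVec G (s + 1) (f + Finsupp.single i 1 + Finsupp.single j 1)

/-- The vertex `i` has at least two distinct neighbours. -/
def NonLeaf (G : SimpleGraph (Fin n)) (i : Fin n) : Prop :=
  ∃ j m, j ≠ m ∧ G.Adj i j ∧ G.Adj i m

/-- The leaves of `G` attached to `k`. -/
noncomputable def leavesAt (G : SimpleGraph (Fin n)) (k : Fin n) : Finset (Fin n) :=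
  open Classical in Finset.univ.filter fun l => G.Adj k l ∧ ∀ m, G.Adj l m → m = k

lemma mem_leavesAt {G : SimpleGraph (Fin n)} {k l : Fin n} :
    l ∈ leavesAt G k ↔ G.Adj k l ∧ ∀ m, G.Adj l m → m = k := by
  simp [leavesAt]

variable {G : SimpleGraph (Fin n)}

lemma DegVec.apply_le {s : ℕ} {d : Fin n →₀ ℕ} (h : DegVec G s d) (v : Fin n) : d v ≤ s := by
  induction h with
  | zero => simp
  | @add s f i j hf hij ih =>
    have hne := hij.ne
    simp only [Finsupp.add_apply, Finsupp.single_apply]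
    split_ifs with h1 h2 h2
    · exact absurd (h1.trans h2.symm) hne
    all_goals omega

lemma DegVec.degree {s : ℕ} {d : Fin n →₀ ℕ} (h : DegVec G s d) : d.degree = 2 * s := by
  induction h with
  | zero => simp
  | @add s f i j hf hij ih =>
    simp only [map_add, ih, Finsupp.degree_single]
    omega

lemma DegVec.exists_edge {s : ℕ} {d : Fin n →₀ ℕ} (h : DegVec G s d) {k : Fin n}
    (hk : d k ≠ 0) : ∃ t f l, s = t + 1 ∧ DegVec G t f ∧ G.Adj k l ∧
      d = f + Finsupp.single k 1 + Finsupp.single l 1 := by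
  induction h with
  | zero => simp at hk
  | @add s f i j hf hij ih =>
    by_cases hi : i = k
    · subst hi; exact ⟨s, f, j, rfl, hf, hij, rfl⟩
    by_cases hj : j = k
    · subst hj; exact ⟨s, f, i, rfl, hf, hij.symm, by abel⟩
    · have : f k ≠ 0 := by simpa [Finsupp.single_apply, hi, hj] using hk
      obtain ⟨t, g, l, rfl, hg, hl, rfl⟩ := ih this
      exact ⟨t + 1, _, l, rfl, hg.add hij, hl, by abel⟩

lemma sum_single_apply (L : Finset (Fin n)) (i : Fin n) :
    ∑ l ∈ L, (Finsupp.single i 1 : Fin n →₀ ℕ) l = if i ∈ L then 1 else 0 := by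
  simp [Finsupp.single_apply]

/-- Every edge meeting a leaf attached to `k` also contains `k`. -/
lemma DegVec.sum_leavesAt_le {s : ℕ} {d : Fin n →₀ ℕ} (h : DegVec G s d) (k : Fin n) :
    ∑ l ∈ leavesAt G k, d l ≤ d k := by
  induction h with
  | zero => simp
  | @add s f i j hf hij ih =>
    simp only [Finsupp.add_apply, Finset.sum_add_distrib, sum_single_apply]
    simp only [Finsupp.single_apply]
    have hi : i ∈ leavesAt G k → j = k ∧ j ∉ leavesAt G k := fun h => by
      have := (mem_leavesAt.1 h).2 j hij
      subst this
      exact ⟨rfl, fun h' => (mem_leavesAt.1 h').1.ne rfl⟩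
    have hj : j ∈ leavesAt G k → i = k ∧ i ∉ leavesAt G k := fun h => by
      have := (mem_leavesAt.1 h).2 i hij.symm
      subst this
      exact ⟨rfl, fun h' => (mem_leavesAt.1 h').1.ne rfl⟩
    by_cases h1 : i ∈ leavesAt G k
    · obtain ⟨h2, h3⟩ := hi h1
      rw [if_pos h1, if_neg h3, if_pos h2]; omega
    · by_cases h2 : j ∈ leavesAt G k
      · obtain ⟨h3, h4⟩ := hj h2
        rw [if_pos h2, if_neg h1, if_pos h3]; omega
      · simp only [h1, h2, if_false]; omega

/-- Either all edges at `k` in the multiset end in leaves attached to `k`, or one of them can be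
removed whose other endpoint is not a leaf. -/
lemma DegVec.leaves_or_edge {s : ℕ} {d : Fin n →₀ ℕ} (h : DegVec G s d) (k : Fin n) :
    d k ≤ ∑ l ∈ leavesAt G k, d l ∨
    ∃ t f l, s = t + 1 ∧ DegVec G t f ∧ G.Adj k l ∧ l ∉ leavesAt G k ∧
      d = f + Finsupp.single k 1 + Finsupp.single l 1 := by
  induction h with
  | zero => simp
  | @add s f i j hf hij ih =>
    rcases ih with ih | ⟨t, g, l, rfl, hg, hl, hl', rfl⟩
    · by_cases hi : i = k
      · subst hi
        by_cases hj : j ∈ leavesAt G i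
        · left
          simp only [Finsupp.add_apply, Finset.sum_add_distrib, sum_single_apply]
          simp only [Finsupp.single_apply, hj, hij.ne.symm, if_true, if_false]
          omega
        · exact .inr ⟨s, f, j, rfl, hf, hij, hj, rfl⟩
      by_cases hj' : j = k
      · subst hj'
        by_cases hj : i ∈ leavesAt G j
        · left
          simp only [Finsupp.add_apply, Finset.sum_add_distrib, sum_single_apply]
          simp only [Finsupp.single_apply, hj, hij.ne, if_true, if_false]
          omega
        · exact .inr ⟨s, f, i, rfl, hf, hij.symm, hj, by abel⟩
      · left
        simp only [Finsupp.add_apply, Finset.sum_add_distrib, sum_single_apply]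
        simp only [Finsupp.single_apply, hi, hj', if_false]
        omega
    · exact .inr ⟨t + 1, _, l, rfl, hg.add hij, hl, hl', by abel⟩

/-- A connected graph with a component `{k, l}` is the single edge `kl`, whose multisets of edges
have only one degree sequence. -/
lemma DegVec.apply_of_single_edge (hconn : G.Connected) {k l : Fin n}
    (hk : ∀ m, G.Adj k m → m = l) (hl : ∀ m, G.Adj l m → m = k)
    {s : ℕ} {d : Fin n →₀ ℕ} (h : DegVec G s d) : d k = s := by
  have hall : ∀ v, v = k ∨ v = l := by
    intro v
    obtain ⟨w⟩ := hconn.preconnected v k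
    induction w with
    | nil => exact .inl rfl
    | cons hadj p ih =>
      rcases ih hk hl with h | h
      · exact .inr (hk _ (h ▸ hadj.symm))
      · exact .inl (hl _ (h ▸ hadj.symm))
  induction h with
  | zero => simp
  | @add s f i j hf hij ih =>
    simp only [Finsupp.add_apply, ih, Finsupp.single_apply]
    rcases hall i with rfl | rfl
    · simp [hij.ne.symm]
    · have := hl _ hij
      subst this
      simp [hij.ne]

/-- The combinatorial core: the common part of two distinct degree sequences of `s + 1` edges is
bounded by a degree sequence of `s` edges plus one unit at a non-leaf vertex. -/
lemma exists_nonLeaf_bound (hconn : G.Connected) {s : ℕ} {d d' : Fin n →₀ ℕ}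
    (hd : DegVec G (s + 1) d) (hd' : DegVec G (s + 1) d') (hne : d ≠ d') :
    ∃ f i, DegVec G s f ∧ NonLeaf G i ∧
      ∀ v, min (d v) (d' v) ≤ f v + (Finsupp.single i 1 : Fin n →₀ ℕ) v := by
  obtain ⟨k, hk⟩ : ∃ k, d k ≠ d' k := by
    by_contra! h
    exact hne (Finsupp.ext h)
  wlog hlt : d' k < d k generalizing d d'
  · obtain ⟨f, i, hf, hi, h⟩ := this hd' hd hne.symm hk.symm (by omega)
    exact ⟨f, i, hf, hi, fun v => by rw [min_comm]; exact h v⟩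
  rcases hd.leaves_or_edge k with h | ⟨t, f, l, ht, hf, hl, hl', rfl⟩
  · have h' := hd'.sum_leavesAt_le k
    obtain ⟨l, hlL, hll⟩ : ∃ l ∈ leavesAt G k, d' l < d l :=
      Finset.exists_lt_of_sum_lt (by omega)
    obtain ⟨hkl, hleaf⟩ := mem_leavesAt.1 hlL
    obtain ⟨t, f, m, ht, hf, hm, rfl⟩ := hd.exists_edge (k := l) (by omega)
    obtain rfl := hleaf _ hm
    obtain rfl : s = t := by omega
    refine ⟨f, m, hf, ?_, fun v => ?_⟩
    · by_contra hnl
      -- Otherwise `G` is the single edge `lm`.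
      refine hk ?_
      have hm' : ∀ q, G.Adj m q → q = l := fun q hq => by
        by_contra hql
        exact hnl ⟨q, l, hql, hq, hkl⟩
      rw [hd.apply_of_single_edge hconn hm' hleaf, hd'.apply_of_single_edge hconn hm' hleaf]
    · simp only [Finsupp.add_apply, Finsupp.single_apply] at hll hlt ⊢
      by_cases h1 : l = v
      · subst h1
        simp only [if_true] at hll ⊢
        omega
      · simp only [h1, if_false]; omega
  · obtain rfl : s = t := by omega
    refine ⟨f, l, hf, ?_, fun v => ?_⟩
    · have : ∃ m, G.Adj l m ∧ m ≠ k := by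
        by_contra! hcon
        exact hl' (mem_leavesAt.2 ⟨hl, hcon⟩)
      obtain ⟨m, hm, hmk⟩ := this
      exact ⟨m, k, hmk, hm, hl.symm⟩
    · simp only [Finsupp.add_apply, Finsupp.single_apply] at hlt ⊢
      by_cases h1 : k = v
      · subst h1
        simp only [if_true] at hlt ⊢
        omega
      · simp only [h1, if_false]; omega

end Combinatorics

/-! ### Koszul homology in degree one -/

section Koszul

variable {K : Type} [Field K] {n : ℕ}

lemma expF_apply (F : Finset (Fin n)) (v : Fin n) : expF F v = if v ∈ F then 1 else 0 := by
  simp [expF, Finsupp.finsetSum_apply, Finsupp.single_apply]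

lemma aexp_apply (v : Fin n) : aexp n v = 1 := by simp [aexp, expF_apply]

lemma expF_singleton (j : Fin n) : expF {j} = Finsupp.single j 1 := by simp [expF]

lemma monomial_mem_span {A : Set (Fin n →₀ ℕ)} {c : Fin n →₀ ℕ} :
    (monomial c (1 : K) : S K n) ∈ Ideal.span ((fun a => (monomial a 1 : S K n)) '' A) ↔
      ∃ b ∈ A, b ≤ c := by
  classical
  rw [mem_ideal_span_monomial_image]
  simp [support_monomial]

lemma kd_single (I : Ideal (S K n)) (a : Fin n →₀ ℕ) {i j : Fin n} (hij : i < j)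
    (hF : ({i, j} : Finset (Fin n)).card = 1 + 1 ∧ expF {i, j} ≤ a ∧
      (monomial (a - expF {i, j}) (1 : K) : S K n) ∈ I)
    (hi : ({i} : Finset (Fin n)).card = 1 ∧ expF {i} ≤ a ∧
      (monomial (a - expF {i}) (1 : K) : S K n) ∈ I)
    (hj : ({j} : Finset (Fin n)).card = 1 ∧ expF {j} ≤ a ∧
      (monomial (a - expF {j}) (1 : K) : S K n) ∈ I) :
    kd I a 1 (Finsupp.single ⟨{i, j}, hF⟩ 1) =
      Finsupp.single (⟨{j}, hj⟩ : KB I a 1) (1 : K) -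
        Finsupp.single (⟨{i}, hi⟩ : KB I a 1) (1 : K) := by
  have hat : ({i, j} : Finset (Fin n)).attach = {⟨i, by simp⟩, ⟨j, by simp⟩} := by
    ext ⟨x, hx⟩
    simp [eq_comm (a := j)]
  have h1 : ({i, j} : Finset (Fin n)).erase i = {j} := by
    ext x; simp; grind
  have h2 : ({i, j} : Finset (Fin n)).erase j = {i} := by
    ext x; simp; grind
  have f1 : (({i, j} : Finset (Fin n)).filter (fun x => x < i)) = ∅ := by
    ext x; simp; grind
  have f2 : (({i, j} : Finset (Fin n)).filter (fun x => x < j)) = {i} := by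
    ext x; simp; grind
  simp only [kd, Finsupp.lsum_single, LinearMap.toSpanSingleton_apply, one_smul]
  rw [hat, Finset.sum_pair (by simpa using hij.ne)]
  simp only [f1, f2, h1, h2]
  simp [sub_eq_add_neg]

/-- The coefficients of a Koszul `1`-cycle sum to zero, since the differential sends every
`1`-chain `[j]` to the generator `[∅]`. -/
lemma kd_zero_sum (I : Ideal (S K n)) (a : Fin n →₀ ℕ) (x : KB I a 1 →₀ K)
    (hx : kd I a 0 x = 0) : (x.sum fun _ c => c) = 0 := by
  have key : (Finsupp.lsum K fun _ : KB I a 0 => (LinearMap.id : K →ₗ[K] K)) ∘ₗ kd I a 0 =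
      Finsupp.lsum K fun _ : KB I a (0 + 1) => (LinearMap.id : K →ₗ[K] K) := by
    apply Finsupp.lhom_ext'
    rintro ⟨F, hF⟩
    obtain ⟨j, rfl⟩ := Finset.card_eq_one.1 hF.1
    ext
    have hat : ({j} : Finset (Fin n)).attach = {⟨j, by simp⟩} := by
      ext ⟨x, hx⟩; simpa using hx
    simp only [kd, LinearMap.comp_apply, Finsupp.lsingle_apply, Finsupp.lsum_single,
      LinearMap.toSpanSingleton_apply, one_smul]
    rw [hat, Finset.sum_singleton]
    simp [Finset.filter_singleton]
  have := LinearMap.congr_fun key x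
  rw [LinearMap.comp_apply, hx, map_zero] at this
  exact this.symm

/-- If `Tor_1(K, J)_a ≠ 0` then two distinct generators of `J` divide `x^a`: with only one, the
strand in degree `a` is the chain complex of a full simplex. -/
lemma exists_two_of_nontrivial {J : Ideal (S K n)} {A : Set (Fin n →₀ ℕ)}
    (hJ : J = Ideal.span ((fun a => (monomial a 1 : S K n)) '' A)) {a : Fin n →₀ ℕ}
    (h : Nontrivial (Hmod J a 1)) : ∃ u ∈ A, ∃ v ∈ A, u ≠ v ∧ u ≤ a ∧ v ≤ a := by
  by_contra! hcon
  have hpair : ∀ {i j : Fin n}, i ≠ j → (expF {i} ≤ a ∧ (monomial (a - expF {i}) (1 : K)) ∈ J) →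
      (expF {j} ≤ a ∧ (monomial (a - expF {j}) (1 : K)) ∈ J) →
      (({i, j} : Finset (Fin n)).card = 1 + 1 ∧ expF {i, j} ≤ a ∧
      (monomial (a - expF {i, j}) (1 : K) : S K n) ∈ J) := by
    rintro i j hij ⟨h1, h2⟩ ⟨h3, h4⟩
    rw [hJ, monomial_mem_span] at h2 h4 ⊢
    obtain ⟨u, hu, hua⟩ := h2
    obtain ⟨v, hv, hva⟩ := h4
    have huv : u = v := by
      by_contra hne
      exact hcon u hu v hv hne (hua.trans tsub_le_self) (hva.trans tsub_le_self)
    subst huv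
    refine ⟨Finset.card_pair hij, fun w => ?_, u, hu, fun w => ?_⟩
    all_goals
      have a1 := h1 w
      have a2 := h3 w
      have a3 := hua w
      have a4 := hva w
      simp only [Finsupp.tsub_apply, expF_apply, Finset.mem_singleton, Finset.mem_insert] at *
      by_cases w1 : w = i
      · have w2 : w ≠ j := fun h => hij (w1.symm.trans h)
        simp only [w1, hij, if_true, if_false, true_or] at *; omega
      · by_cases w2 : w = j
        · simp only [w2, hij.symm, if_true, if_false, or_true] at *; omega
        · simp only [w1, w2, if_false, or_false] at *; omega
  have hdiff : ∀ F F' : KB J a 1, (Finsupp.single F (1 : K) - Finsupp.single F' 1) ∈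
      LinearMap.range (kd J a 1) := by
    rintro ⟨F, hF⟩ ⟨F', hF'⟩
    obtain ⟨i, rfl⟩ := Finset.card_eq_one.1 hF.1
    obtain ⟨j, rfl⟩ := Finset.card_eq_one.1 hF'.1
    rcases lt_trichotomy i j with hij | hij | hij
    · rw [← neg_sub]
      exact neg_mem ⟨_, kd_single J a hij (hpair hij.ne hF.2 hF'.2) hF hF'⟩
    · subst hij
      simp
    · exact ⟨_, kd_single J a hij (hpair hij.ne hF'.2 hF.2) hF' hF⟩
  have hker : LinearMap.ker (kdOut J a 1) ≤ LinearMap.range (kd J a 1) := by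
    intro x hx
    have hx0 : kd J a 0 x = 0 := hx
    have hsum := kd_zero_sum J a x hx0
    by_cases hxz : x = 0
    · rw [hxz]; exact zero_mem _
    obtain ⟨F0, -⟩ := Finsupp.ne_iff.1 hxz
    have hx' : x = x.sum fun F c => c • (Finsupp.single F (1 : K) - Finsupp.single F0 1) := by
      simp only [smul_sub, Finsupp.sum_sub, Finsupp.smul_single, smul_eq_mul, mul_one]
      rw [Finsupp.sum_single]
      have : (x.sum fun _ c => Finsupp.single F0 c) = 0 := by
        rw [Finsupp.sum, ← Finsupp.single_finsetSum]
        rw [Finsupp.sum] at hsum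
        rw [hsum, Finsupp.single_zero]
      rw [this, sub_zero]
    rw [hx']
    exact Submodule.sum_mem _ fun F _ => Submodule.smul_mem _ _ (hdiff F F0)
  have hbot : Submodule.map (Submodule.mkQ (LinearMap.range (kd J a 1)))
      (LinearMap.ker (kdOut J a 1)) = ⊥ := by
    rw [← LinearMap.le_ker_iff_map, Submodule.ker_mkQ]
    exact hker
  exact (Submodule.nontrivial_iff_ne_bot.1 h) hbot

/-- If the Koszul strand in degree `a` has no `2`-chains but at least two `1`-chains, then
`Tor_1(K, J)_a ≠ 0`. -/
lemma nontrivial_of_two {J : Ideal (S K n)} {a : Fin n →₀ ℕ} (hE : IsEmpty (KB J a 2))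
    {i j : Fin n} (hij : i ≠ j)
    (hi : expF {i} ≤ a ∧ (monomial (a - expF {i}) (1 : K)) ∈ J)
    (hj : expF {j} ≤ a ∧ (monomial (a - expF {j}) (1 : K)) ∈ J) :
    Nontrivial (Hmod J a 1) := by
  rw [Submodule.nontrivial_iff_ne_bot]
  intro hbot
  rw [← LinearMap.le_ker_iff_map, Submodule.ker_mkQ] at hbot
  let F : KB J a 1 := ⟨{i}, by simp, hi⟩
  let F' : KB J a 1 := ⟨{j}, by simp, hj⟩
  have hFF' : F ≠ F' := fun h => hij (by simpa [F, F'] using congrArg Subtype.val h)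
  have hmem : Finsupp.single F (1 : K) - Finsupp.single F' 1 ∈ LinearMap.ker (kdOut J a 1) := by
    have hd : ∀ (k : Fin n) (hk : ({k} : Finset (Fin n)).card = 0 + 1 ∧ expF {k} ≤ a ∧
        (monomial (a - expF {k}) (1 : K) : S K n) ∈ J) (h0 : (∅ : Finset (Fin n)).card = 0 ∧
        expF ∅ ≤ a ∧ (monomial (a - expF ∅) (1 : K) : S K n) ∈ J),
        kd J a 0 (Finsupp.single ⟨{k}, hk⟩ 1) = Finsupp.single ⟨∅, h0⟩ 1 := by
      intro k hk h0
      have hat : ({k} : Finset (Fin n)).attach = {⟨k, by simp⟩} := by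
        ext ⟨x, hx⟩; simpa using hx
      simp only [kd, Finsupp.lsum_single, LinearMap.toSpanSingleton_apply, one_smul]
      rw [hat, Finset.sum_singleton]
      simp [Finset.filter_singleton]
    have h0 : (∅ : Finset (Fin n)).card = 0 ∧ expF ∅ ≤ a ∧
        (monomial (a - expF ∅) (1 : K) : S K n) ∈ J := by
      refine ⟨rfl, by simp [expF], ?_⟩
      have : a - expF ∅ = (a - expF {i}) + expF {i} := by
        rw [tsub_add_cancel_of_le hi.1]; simp [expF]
      rw [this, show (monomial ((a - expF {i}) + expF {i}) (1 : K) : S K n) =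
        monomial (a - expF {i}) 1 * monomial (expF {i}) 1 by rw [monomial_mul, mul_one]]
      exact Ideal.mul_mem_right _ _ hi.2
    change kd J a 0 _ = 0
    rw [map_sub]
    exact sub_eq_zero.2 ((hd i _ h0).trans (hd j _ h0).symm)
  obtain ⟨y, hy⟩ := hbot hmem
  have hy0 : y = 0 := Finsupp.ext fun Z => (hE.false Z).elim
  rw [hy0, map_zero] at hy
  have := DFunLike.congr_fun hy F
  simp [hFF'.symm] at this

end Koszul

/-! ### Powers of the complementary edge ideal -/

section Ideals

variable {K : Type} [Field K] {n : ℕ} {G : SimpleGraph (Fin n)}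

/-- The exponents `s·𝟙 - deg f` of the generators of `I_c(G)^s`, `f` a multiset of `s` edges. -/
def genExp (G : SimpleGraph (Fin n)) (s : ℕ) : Set (Fin n →₀ ℕ) :=
  {b | ∃ f, DegVec G s f ∧ b + f = s • aexp n}

/-- The exponents `(s+1)·𝟙 - deg f - ε_i` of the generators of `HS_1(I_c(G)^{s+1})`, where `f` is a
multiset of `s` edges and `i` a non-leaf vertex. -/
def shiftExp (G : SimpleGraph (Fin n)) (s : ℕ) : Set (Fin n →₀ ℕ) :=
  {b | ∃ f i, DegVec G s f ∧ NonLeaf G i ∧ b + f + Finsupp.single i 1 = (s + 1) • aexp n}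

lemma DegVec.le_smul {s : ℕ} {f : Fin n →₀ ℕ} (h : DegVec G s f) : f ≤ s • aexp n := fun v => by
  simpa [aexp_apply] using h.apply_le v

lemma degVec_pair {i j : Fin n} (h : G.Adj i j) :
    DegVec G 1 (Finsupp.single i 1 + Finsupp.single j 1) := by
  simpa using DegVec.zero.add h

lemma DegVec.of_one {d : Fin n →₀ ℕ} (h : DegVec G 1 d) :
    ∃ i j, G.Adj i j ∧ d = Finsupp.single i 1 + Finsupp.single j 1 := by
  cases h with
  | @add _ f i j hf hij =>
    cases hf
    exact ⟨i, j, hij, by simp⟩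

lemma compIdeal_eq : compIdeal K n G =
    Ideal.span ((fun a => (monomial a 1 : S K n)) '' genExp G 1) := by
  unfold compIdeal
  congr 1
  ext p
  constructor
  · rintro ⟨i, j, hij, rfl⟩
    refine ⟨_, ⟨_, degVec_pair hij, ?_⟩, rfl⟩
    rw [tsub_tsub, tsub_add_cancel_of_le, one_smul]
    simpa using (degVec_pair hij).le_smul
  · rintro ⟨b, ⟨f, hf, hb⟩, rfl⟩
    obtain ⟨i, j, hij, rfl⟩ := hf.of_one
    refine ⟨i, j, hij, ?_⟩
    rw [one_smul] at hb
    simp only [tsub_tsub, ← hb, add_tsub_cancel_right]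

lemma span_monomial_mul (A B : Set (Fin n →₀ ℕ)) :
    Ideal.span ((fun a => (monomial a 1 : S K n)) '' A) *
      Ideal.span ((fun a => (monomial a 1 : S K n)) '' B) =
    Ideal.span ((fun a => (monomial a 1 : S K n)) '' {c | ∃ a ∈ A, ∃ b ∈ B, a + b = c}) := by
  rw [Ideal.span_mul_span']
  congr 1
  ext p
  simp only [Set.mem_mul, Set.mem_image, Set.mem_ofPred_eq]
  constructor
  · rintro ⟨_, ⟨a, ha, rfl⟩, _, ⟨b, hb, rfl⟩, rfl⟩
    exact ⟨a + b, ⟨a, ha, b, hb, rfl⟩, by simp [monomial_mul]⟩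
  · rintro ⟨_, ⟨a, ha, b, hb, rfl⟩, rfl⟩
    exact ⟨_, ⟨a, ha, rfl⟩, _, ⟨b, hb, rfl⟩, by simp [monomial_mul]⟩

lemma compIdeal_pow (s : ℕ) : compIdeal K n G ^ s =
    Ideal.span ((fun a => (monomial a 1 : S K n)) '' genExp G s) := by
  induction s with
  | zero =>
    have : (0 : Fin n →₀ ℕ) ∈ genExp G 0 := ⟨0, .zero, by simp⟩
    rw [pow_zero, Ideal.one_eq_top, eq_comm, Ideal.eq_top_iff_one]
    exact Ideal.subset_span ⟨0, this, by simp⟩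
  | succ s ih =>
    rw [pow_succ, ih, compIdeal_eq, span_monomial_mul]
    congr 2
    ext c
    constructor
    · rintro ⟨a, ⟨f, hf, ha⟩, b, ⟨g, hg, hb⟩, rfl⟩
      obtain ⟨i, j, hij, rfl⟩ := hg.of_one
      refine ⟨_, hf.add hij, ?_⟩
      rw [add_smul, ← ha, ← hb]
      abel
    · rintro ⟨d, hd, hc⟩
      cases hd with
      | @add _ f i j hf hij =>
      refine ⟨_, ⟨f, hf, tsub_add_cancel_of_le hf.le_smul⟩,
        _, ⟨_, degVec_pair hij, tsub_add_cancel_of_le (degVec_pair hij).le_smul⟩, ?_⟩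
      apply add_right_cancel (b := f + (Finsupp.single i 1 + Finsupp.single j 1))
      rw [add_add_add_comm, tsub_add_cancel_of_le hf.le_smul,
        tsub_add_cancel_of_le (degVec_pair hij).le_smul, ← add_smul, ← hc]
      abel

lemma add_single_le {s : ℕ} {f : Fin n →₀ ℕ} (hf : DegVec G s f) (i : Fin n) :
    f + Finsupp.single i 1 ≤ (s + 1) • aexp n := fun v => by
  have := hf.apply_le v
  simp only [Finsupp.add_apply, Finsupp.smul_apply, aexp_apply, smul_eq_mul, Finsupp.single_apply]
  split_ifs <;> omega

lemma mul_shift (s : ℕ) : compIdeal K n G ^ s *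
      Ideal.span ((fun a => (monomial a 1 : S K n)) '' shiftExp G 0) =
    Ideal.span ((fun a => (monomial a 1 : S K n)) '' shiftExp G s) := by
  rw [compIdeal_pow, span_monomial_mul]
  congr 2
  ext c
  constructor
  · rintro ⟨a, ⟨f, hf, ha⟩, b, ⟨g, i, hg, hi, hb⟩, rfl⟩
    cases hg
    refine ⟨f, i, hf, hi, ?_⟩
    rw [add_smul, ← ha, ← (zero_add 1 : (0 + 1 : ℕ) = 1), ← hb]
    simp only [zero_add, add_zero]
    abel
  · rintro ⟨f, i, hf, hi, hc⟩
    have h1 : Finsupp.single i 1 ≤ (0 + 1) • aexp n := by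
      simpa using add_single_le (G := G) .zero i
    refine ⟨_, ⟨f, hf, tsub_add_cancel_of_le hf.le_smul⟩,
      (0 + 1) • aexp n - Finsupp.single i 1, ⟨0, i, .zero, hi, ?_⟩, ?_⟩
    · rw [add_zero, tsub_add_cancel_of_le h1]
    · apply add_right_cancel (b := f + Finsupp.single i 1)
      rw [add_add_add_comm, tsub_add_cancel_of_le hf.le_smul, tsub_add_cancel_of_le h1, zero_add,
        ← add_smul, ← hc]
      abel

/-- In degree `b ∈ shiftExp G s` the Koszul strand of `I_c(G)^{s+1}` has no `2`-chains because
`|b|` exceeds the generating degree by one only. -/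
lemma nontrivial_of_mem_shiftExp {s : ℕ} {b : Fin n →₀ ℕ} (hb : b ∈ shiftExp G s) :
    Nontrivial (Hmod (compIdeal K n G ^ (s + 1)) b 1) := by
  obtain ⟨f, i, hf, ⟨j, m, hjm, hj, hm⟩, hb⟩ := hb
  have hmem : ∀ {q}, G.Adj i q →
      (expF {q} ≤ b ∧ (monomial (b - expF {q}) (1 : K)) ∈ compIdeal K n G ^ (s + 1)) := by
    intro q hq
    have hle : expF {q} ≤ b := by
      intro v
      have h1 := (hf.add hq).apply_le v
      have h2 := DFunLike.congr_fun hb v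
      simp only [Finsupp.add_apply, Finsupp.smul_apply, aexp_apply, smul_eq_mul,
        expF_singleton] at h1 h2 ⊢
      omega
    refine ⟨hle, ?_⟩
    rw [compIdeal_pow, monomial_mem_span]
    refine ⟨_, ⟨_, hf.add hq, ?_⟩, le_rfl⟩
    obtain ⟨c, rfl⟩ := exists_add_of_le hle
    rw [add_tsub_cancel_left, ← hb, expF_singleton]
    abel
  refine nontrivial_of_two ⟨?_⟩ hjm (hmem hj) (hmem hm)
  rintro ⟨F, hF, hle, hmemF⟩
  rw [compIdeal_pow, monomial_mem_span] at hmemF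
  obtain ⟨u, ⟨d, hd, hu⟩, hub⟩ := hmemF
  have e1 := congrArg Finsupp.degree hb
  have e2 := congrArg Finsupp.degree hu
  have e3 := congrArg Finsupp.degree (tsub_add_cancel_of_le hle)
  have e4 := congrArg Finsupp.degree (tsub_add_cancel_of_le hub)
  have e5 : (expF F).degree = 2 := by simp [expF, hF]
  simp only [map_add, hf.degree, hd.degree, Finsupp.degree_single, e5] at e1 e2 e3 e4
  omega

lemma HSIdeal_one_pow (hconn : G.Connected) (s : ℕ) :
    HSIdeal 1 (compIdeal K n G ^ (s + 1)) =
      Ideal.span ((fun a => (monomial a 1 : S K n)) '' shiftExp G s) := by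
  apply le_antisymm
  · refine Ideal.span_le.2 ?_
    rintro _ ⟨a, ha, rfl⟩
    obtain ⟨u, ⟨d, hd, hu⟩, v, ⟨d', hd', hv⟩, huv, hua, hva⟩ :=
      exists_two_of_nontrivial (compIdeal_pow (s + 1)) ha
    have hne : d ≠ d' := by
      rintro rfl
      exact huv (add_right_cancel (hu.trans hv.symm))
    obtain ⟨f, i, hf, hi, hmin⟩ := exists_nonLeaf_bound hconn hd hd' hne
    rw [SetLike.mem_coe, monomial_mem_span]
    refine ⟨(s + 1) • aexp n - (f + Finsupp.single i 1), ⟨f, i, hf, hi, ?_⟩, fun w => ?_⟩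
    · rw [add_assoc, tsub_add_cancel_of_le (add_single_le hf i)]
    · have h1 := hmin w
      have h2 := DFunLike.congr_fun hu w
      have h3 := DFunLike.congr_fun hv w
      have h4 := hua w
      have h5 := hva w
      simp only [Finsupp.tsub_apply, Finsupp.add_apply, Finsupp.smul_apply, aexp_apply,
        smul_eq_mul] at h2 h3 ⊢
      omega
  · refine Ideal.span_mono ?_
    rintro _ ⟨b, hb, rfl⟩
    exact ⟨b, nontrivial_of_mem_shiftExp hb, rfl⟩

end Ideals

/-- For a connected graph `G` on `[n]` and `I = I_c(G)`,
`HS_1(I^{s+1}) = I^s · HS_1(I)` for all `s ≥ 0`; consequently the first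
homological shift algebra `HS_1(ℛ(I))` is generated in degree `1`. -/
theorem hs_one_compIdeal_pow
    (K : Type) [Field K] (n : ℕ) (G : SimpleGraph (Fin n)) (hconn : G.Connected) :
    ∀ s : ℕ, HSIdeal 1 (compIdeal K n G ^ (s + 1)) =
      compIdeal K n G ^ s * HSIdeal 1 (compIdeal K n G) := by
  intro s
  have h0 := HSIdeal_one_pow (K := K) hconn 0
  rw [zero_add, pow_one] at h0
  rw [HSIdeal_one_pow hconn, h0, mul_shift]

end Paper
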